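/- arXiv:1502.02786 — 6 statements merged into one kernel-verified Lean document; each statement's English description precedes it below -/
import Mathlib

section
/- Let A be a unital complex Banach algebra, B a unital Banach algebra, and ι : A → B an injective continuous unital algebra homomorphism with dense range. Suppose there exists a ∈ A such that a is not left invertible in A but ι(a) is invertible in B. Then there exists a nonzero Banach space E carrying a jointly continuous left A-module structure which is algebraically irreducible (A•e = E for every nonzero e ∈ E), together with a nonzero vector ξ ∈ E satisfying a•ξ = 0; consequently there is no left B-module H (on which A acts through ι) admitting an injective A-module map E → H. -/
/-!
Since `a` has no left inverse, the left ideal `A a` is proper, so it lies in a maximal left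
ideal `M`, which is closed because `A` is a Banach algebra. The quotient `E = A ⧸ M` is then a
simple Banach `A`-module, and the class `ξ` of `1` is nonzero with `a • ξ = 0`. An injective
`A`-module map `j` from `E` to a `B`-module would give `ι a • j ξ = 0` with `ι a` a unit,
hence `ξ = 0`.
-/

/-- A witness for Statement 1: a nonzero Banach space `E` with a jointly continuous,
algebraically irreducible left `A`-module structure and a nonzero vector `ξ` killed by
`a`, which consequently embeds in no `B`-module (where `A` acts on `B`-modules through
`ι`). -/
structure NonExtendableIrreducibleModule (A B : Type) [Ring A] [Algebra ℂ A]
    [TopologicalSpace A] [Ring B] (ι : A → B) (a : A) where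
  /-- The underlying Banach space. -/
  E : Type
  [grp : NormedAddCommGroup E]
  [nsp : NormedSpace ℂ E]
  [cs : CompleteSpace E]
  [mod : Module A E]
  [tower : IsScalarTower ℂ A E]
  nontrivial : Nontrivial E
  /-- The module action is jointly continuous. -/
  cont : Continuous fun q : A × E => q.1 • q.2
  /-- The module is algebraically irreducible: `A • e = E` for every nonzero `e`. -/
  alg_irreducible : ∀ e : E, e ≠ 0 → ∀ x : E, ∃ b : A, b • e = x
  /-- A nonzero vector annihilated by `a`. -/
  ξ : E
  ξ_ne : ξ ≠ 0
  annihilated : a • ξ = 0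
  /-- Consequently, there is no left `B`-module `H` admitting an injective `A`-module
  map `E → H`, where `A` acts on `H` through `ι`. -/
  no_extension : ∀ (H : Type) [AddCommGroup H] [Module B H] (j : E → H),
    (∀ x y : E, j (x + y) = j x + j y) →
    (∀ (b : A) (x : E), j (b • x) = ι b • j x) →
    ¬ Function.Injective j

/-- Let `A` be a unital complex Banach algebra, `B` a unital Banach
algebra, and `ι : A → B` an injective continuous unital algebra homomorphism with dense
range.  If some `a ∈ A` is not left invertible in `A` but `ι a` is invertible in `B`,
then there is a nonzero Banach space `E` with a jointly continuous, algebraically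
irreducible left `A`-module structure and a nonzero `ξ ∈ E` with `a • ξ = 0`; such a
module embeds in no `B`-module. -/
theorem exists_nonextendable_irreducible_module
    (A : Type) [NormedRing A] [NormedAlgebra ℂ A] [CompleteSpace A]
    (B : Type) [NormedRing B] [NormedAlgebra ℂ B] [CompleteSpace B]
    (ι : A →ₐ[ℂ] B) (hι_cont : Continuous ι) (hι_inj : Function.Injective ι)
    (hι_dense : DenseRange ι)
    (a : A) (ha_left : ¬ ∃ b : A, b * a = 1) (ha_inv : IsUnit (ι a)) :
    Nonempty (NonExtendableIrreducibleModule A B ι a) := by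
  obtain ⟨M, hM, haM⟩ := Ideal.exists_le_maximal (Ideal.span {a}) (by
    rw [Ne, Ideal.eq_top_iff_one, Ideal.mem_span_singleton']
    exact ha_left)
  -- A maximal left ideal is closed because the units of a Banach algebra form an open set.
  have : IsClosed (M : Set A) := Ideal.IsMaximal.isClosed
  have h1 : (1 : A) ∉ M := (Ideal.ne_top_iff_one M).mp hM.ne_top
  have hξ : (Submodule.Quotient.mk 1 : A ⧸ M) ≠ 0 := by
    rwa [Ne, Submodule.Quotient.mk_eq_zero]
  have hann : a • (Submodule.Quotient.mk 1 : A ⧸ M) = 0 := by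
    rw [← Submodule.Quotient.mk_smul, Submodule.Quotient.mk_eq_zero, smul_eq_mul, mul_one]
    exact haM (Ideal.subset_span rfl)
  have : IsSimpleModule A (A ⧸ M) := isSimpleModule_iff_isCoatom.mpr hM.out
  exact ⟨{
    E := A ⧸ M
    nontrivial := ⟨_, 0, hξ⟩
    cont := continuous_smul
    alg_irreducible := fun e he => IsSimpleModule.toSpanSingleton_surjective A he
    ξ := Submodule.Quotient.mk 1
    ξ_ne := hξ
    annihilated := hann
    no_extension := by
      intro H _ _ j hadd hsmul hinj
      have hj0 : j 0 = 0 := by simpa using hadd 0 0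
      have h := hsmul a (Submodule.Quotient.mk 1)
      rw [hann, hj0, eq_comm, ha_inv.smul_eq_zero] at h
      exact hξ (hinj (h.trans hj0.symm)) }⟩
end

section
/- Let (A_n)_{n∈ℕ} be a sequence of Banach spaces and for each n let π_n : A_{n+1} → A_n be a continuous linear map with ‖π_n(x)‖ ≤ ‖x‖ for all x ∈ A_{n+1}. Let L = { a ∈ ∏_{n∈ℕ} A_n : π_n(a_{n+1}) = a_n for all n }, endowed with the topology induced from the product topology. If D ⊆ L is a linear subspace which is complete (in the induced uniform structure) and whose image under the n-th coordinate projection is dense in A_n for every n, then D = L. -/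
/-!
A complete subspace of a Hausdorff space is closed, so it suffices to approximate a compatible
sequence `a` by elements of `D`. By density there is `d n ∈ D` with `‖a n - d n n‖ < 1 / (n + 1)`;
since the connecting maps are contractive, the norms of the coordinates of the compatible sequence
`a - d n` increase with the index (`norm_mono_of_compatible`), so the same bound holds at every
coordinate `k ≤ n`. Hence `d n → a` coordinatewise, that is, in the product topology.
-/

theorem norm_mono_of_compatible {A : ℕ → Type*} [∀ n, NormedAddCommGroup (A n)]
    [∀ n, NormedSpace ℂ (A n)] (π : ∀ n, A (n + 1) →L[ℂ] A n) (hπ : ∀ n x, ‖π n x‖ ≤ ‖x‖)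
    {a : ∀ n, A n} (ha : ∀ n, π n (a (n + 1)) = a n) : Monotone fun n => ‖a n‖ :=
  monotone_nat_of_le_succ fun n => by
    have h := hπ n (a (n + 1))
    rwa [ha n] at h

/-- (Lifting lemma for inverse limits of Banach spaces, used in the proof
of Theorem 3.1.)  Let `(A n)` be Banach spaces with contractive connecting maps
`π n : A (n+1) → A n`, and let `L ⊆ ∏ n, A n` be the inverse limit, with the topology
induced by the product topology.  If `D` is a linear subspace of `L` which is complete
(for the induced uniform structure) and has dense image in each `A n`, then `D = L`. -/
theorem inverse_limit_lifting
    (A : ℕ → Type*) [∀ n, NormedAddCommGroup (A n)] [∀ n, NormedSpace ℂ (A n)]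
    [∀ n, CompleteSpace (A n)]
    (π : ∀ n, A (n + 1) →L[ℂ] A n) (hπ : ∀ n x, ‖π n x‖ ≤ ‖x‖)
    (D : Submodule ℂ (∀ n, A n))
    (hD_sub : ∀ a ∈ D, ∀ n, π n (a (n + 1)) = a n)
    (hD_complete : IsComplete (D : Set (∀ n, A n)))
    (hD_dense : ∀ n, Dense ((fun a : ∀ k, A k => a n) '' (D : Set (∀ n, A n)))) :
    (D : Set (∀ n, A n)) = {a : ∀ n, A n | ∀ n, π n (a (n + 1)) = a n} := by
  refine Set.Subset.antisymm hD_sub fun a ha => ?_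
  have happrox : ∀ n : ℕ, ∃ d ∈ D, ‖a n - d n‖ < 1 / ((n : ℝ) + 1) := by
    intro n
    obtain ⟨_, ⟨d, hd, rfl⟩, hlt⟩ :=
      Metric.dense_iff.1 (hD_dense n) (a n) (1 / ((n : ℝ) + 1)) (by positivity) |>.imp
        fun _ h => And.symm h
    exact ⟨d, hd, by simpa [dist_eq_norm, norm_sub_rev] using hlt⟩
  choose d hdD hd using happrox
  refine hD_complete.isClosed.mem_of_tendsto (f := d) (b := Filter.atTop) ?_
    (Filter.Eventually.of_forall hdD)
  refine tendsto_pi_nhds.2 fun k => tendsto_iff_norm_sub_tendsto_zero.2 ?_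
  refine squeeze_zero' (Filter.Eventually.of_forall fun _ => norm_nonneg _) ?_
    (tendsto_one_div_add_atTop_nhds_zero_nat (𝕜 := ℝ))
  filter_upwards [Filter.eventually_ge_atTop k] with n hkn
  have hcompat : ∀ m, π m ((a - d n) (m + 1)) = (a - d n) m := fun m => by
    simp [ha m, hD_sub (d n) (hdD n) m]
  rw [norm_sub_rev]
  exact (norm_mono_of_compatible π hπ hcompat hkn).trans (hd n).le
end

section
/- Let θ be an irrational real number and let 𝕋 = ℝ/ℤ be the additive circle with Haar probability measure μ. For every nonzero η ∈ L¹(𝕋, μ), the closed linear span in L¹(𝕋, μ) of the set of functions { x ↦ f(x)·η(x − nθ) : f ∈ C(𝕋, ℂ), n ∈ ℤ } is all of L¹(𝕋, μ). -/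
/-!
Let `V` be the closed span and `Aₙ` the set where `η(· − nθ)` does not vanish.

* Every `h ∈ L¹` vanishing off `Aₙ` lies in `V` (`exists_continuous_mul_close`): the quotient
  `h / η(· − nθ)` is integrable for the finite measure `|η(· − nθ)| dμ`, so it can be approximated
  by a continuous `f` in `L¹(|η(· − nθ)| dμ)`, which says exactly that `f · η(· − nθ)` is close to
  `h` in `L¹(μ)`.
* Hence `V` contains every `h` vanishing off a finite union of the `Aₙ`, and, being closed, every
  `h` vanishing off their countable union (`mem_of_support_cover`).
* The union of the `Aₙ` is invariant under rotation by `θ` and is not null because `η ≠ 0`, so by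
  ergodicity it is conull (`ae_exists_translate_ne_zero`).
-/

open MeasureTheory

/-- The functions `f · k` with `f` continuous are `L¹`-dense among the integrable functions that
vanish wherever `k` does. -/
lemma exists_continuous_mul_close {X : Type*} [TopologicalSpace X] [CompactSpace X]
    [TopologicalSpace.PseudoMetrizableSpace X] [MeasurableSpace X] [BorelSpace X]
    {μ : Measure X}
    {k h : X → ℂ} (hkm : Measurable k) (hk : Integrable k μ) (hhm : Measurable h)
    (hh : Integrable h μ) (hz : ∀ᵐ x ∂μ, k x = 0 → h x = 0)
    {ε : ENNReal} (hε : ε ≠ 0) :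
    ∃ f : C(X, ℂ), ∫⁻ x, ‖h x - f x * k x‖ₑ ∂μ ≤ ε := by
  set ν : Measure X := μ.withDensity (fun x => ‖k x‖ₑ) with hν
  have hfin : IsFiniteMeasure ν := isFiniteMeasure_withDensity hk.2.ne
  have key : ∀ u : X → ℂ, Measurable u →
      ∫⁻ x, ‖u x‖ₑ ∂ν = ∫⁻ x, ‖u x * k x‖ₑ ∂μ := by
    intro u hu
    rw [hν, lintegral_withDensity_eq_lintegral_mul _ hkm.enorm hu.enorm]
    refine lintegral_congr fun x => ?_
    simp [enorm_mul, mul_comm]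
  have hquot : ∀ᵐ x ∂μ, h x / k x * k x = h x := by
    filter_upwards [hz] with x hx
    by_cases h0 : k x = 0
    · simp [h0, hx h0]
    · exact div_mul_cancel₀ _ h0
  have hgm : Measurable fun x => h x / k x := hhm.div hkm
  have hg : Integrable (fun x => h x / k x) ν := by
    refine ⟨hgm.aestronglyMeasurable, ?_⟩
    rw [HasFiniteIntegral, key _ hgm]
    refine lt_of_le_of_lt (le_of_eq (lintegral_congr_ae ?_)) hh.2
    filter_upwards [hquot] with x hx
    rw [hx]
  obtain ⟨f, hf, -⟩ := hg.exists_boundedContinuous_lintegral_sub_le hε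
  refine ⟨f.toContinuousMap, ?_⟩
  rw [key (fun x => h x / k x - f x) (hgm.sub f.continuous.measurable)] at hf
  refine le_of_eq_of_le (lintegral_congr_ae ?_) hf
  filter_upwards [hquot] with x hx
  simp only [sub_mul, hx]
  rfl

/-- If a closed subspace of `L¹` contains every function vanishing off one of countably many sets
that cover almost everything, then it is the whole of `L¹`. -/
lemma mem_of_support_cover {X : Type*} [MeasurableSpace X] {μ : Measure X}
    {V : Submodule ℂ (Lp ℂ 1 μ)} (hV : IsClosed (V : Set (Lp ℂ 1 μ)))
    {A : ℕ → Set X} (hA : ∀ n, MeasurableSet (A n)) (hcov : ∀ᵐ x ∂μ, ∃ n, x ∈ A n)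
    (hAV : ∀ n, ∀ h : Lp ℂ 1 μ, (∀ᵐ x ∂μ, x ∉ A n → h x = 0) → h ∈ V) (h : Lp ℂ 1 μ) :
    h ∈ V := by
  have hB : ∀ n, MeasurableSet (Set.accumulate A n) := fun n => by
    rw [Set.accumulate_def]
    exact .biUnion (Set.to_countable _) fun i _ => hA i
  have hacc : ∀ n, ∀ g : Lp ℂ 1 μ, (∀ᵐ x ∂μ, x ∉ Set.accumulate A n → g x = 0) → g ∈ V := by
    intro n
    induction n with
    | zero =>
      intro g hg
      refine hAV 0 g ?_
      filter_upwards [hg] with x hx h0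
      exact hx (by simpa [Set.accumulate_def] using h0)
    | succ n ih =>
      intro g hg
      have hgi : Integrable g μ := L1.integrable_coeFn g
      have h1 : Integrable ((Set.accumulate A n).indicator g) μ := hgi.indicator (hB n)
      have h2 : Integrable ((Set.accumulate A n)ᶜ.indicator g) μ := hgi.indicator (hB n).compl
      have hsplit : g = h1.toL1 _ + h2.toL1 _ := by
        refine Lp.ext ?_
        filter_upwards [Lp.coeFn_add (h1.toL1 _) (h2.toL1 _), h1.coeFn_toL1, h2.coeFn_toL1]
          with x ha hx1 hx2
        rw [ha, Pi.add_apply, hx1, hx2]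
        exact (congrFun (Set.indicator_self_add_compl _ _) x).symm
      rw [hsplit]
      refine V.add_mem (ih _ ?_) (hAV (n + 1) _ ?_)
      · filter_upwards [h1.coeFn_toL1] with x hx hxn
        rw [hx, Set.indicator_of_notMem hxn]
      · filter_upwards [h2.coeFn_toL1, hg] with x hx hgx hxn
        rw [hx]
        by_cases hxa : x ∈ Set.accumulate A n
        · exact Set.indicator_of_notMem (Set.notMem_compl_iff.2 hxa) _
        · rw [Set.indicator_of_mem hxa]
          refine hgx ?_
          rw [Set.accumulate_succ]
          exact fun hc => hc.elim hxa hxn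
  have hhi : Integrable h μ := L1.integrable_coeFn h
  have hi : ∀ n, Integrable ((Set.accumulate A n).indicator h) μ := fun n => hhi.indicator (hB n)
  refine hV.mem_of_tendsto (f := fun n => (hi n).toL1 _) (b := Filter.atTop) ?_
    (Filter.Eventually.of_forall fun n => hacc n _ ?_)
  · have hd : ∀ n, dist ((hi n).toL1 _) h = ∫ x in (Set.accumulate A n)ᶜ, ‖h x‖ ∂μ := by
      intro n
      rw [dist_comm, dist_eq_norm, L1.norm_eq_integral_norm, ← integral_indicator (hB n).compl]
      refine integral_congr_ae ?_
      filter_upwards [Lp.coeFn_sub h ((hi n).toL1 _), (hi n).coeFn_toL1] with x hx hx1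
      rw [hx, Pi.sub_apply, hx1]
      by_cases hxa : x ∈ Set.accumulate A n <;> simp [hxa]
    rw [tendsto_iff_dist_tendsto_zero]
    simp only [hd]
    have ht := tendsto_setIntegral_of_antitone (μ := μ) (f := fun x => ‖h x‖)
      (s := fun n => (Set.accumulate A n)ᶜ) (fun n => (hB n).compl)
      (fun m n hmn => Set.compl_subset_compl.2 (Set.monotone_accumulate hmn))
      ⟨0, hhi.norm.integrableOn⟩
    have hnull : μ (⋂ n, (Set.accumulate A n)ᶜ) = 0 := by
      rw [← Set.compl_iUnion, Set.iUnion_accumulate]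
      refine measure_mono_null ?_ (ae_iff.1 hcov)
      intro x hx
      simpa using hx
    rwa [setIntegral_measure_zero _ hnull] at ht
  · filter_upwards [(hi n).coeFn_toL1] with x hx hxn
    rw [hx, Set.indicator_of_notMem hxn]

/-- Ergodicity of the irrational rotation: almost every orbit meets the set where `k ≠ 0`. -/
lemma ae_exists_translate_ne_zero {θ : ℝ} (hθ : Irrational θ) {k : AddCircle (1 : ℝ) → ℂ}
    (hkm : Measurable k) (hk : ¬ k =ᵐ[volume] 0) :
    ∀ᵐ x, ∃ n : ℤ, k (x - n • (θ : AddCircle (1 : ℝ))) ≠ 0 := by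
  have hdense : DenseRange (· • (θ : AddCircle (1 : ℝ)) : ℤ → AddCircle (1 : ℝ)) :=
    AddCircle.denseRange_zsmul_coe_iff.2 (by simpa using hθ)
  have herg : Ergodic ((θ : AddCircle (1 : ℝ)) + ·) volume :=
    ergodic_add_left_of_denseRange_zsmul hdense _
  set S : Set (AddCircle (1 : ℝ)) := {x | ∃ n : ℤ, k (x - n • (θ : AddCircle (1 : ℝ))) ≠ 0}
    with hS
  have hSm : MeasurableSet S := by
    have : S = ⋃ n : ℤ, (fun x => k (x - n • (θ : AddCircle (1 : ℝ)))) ⁻¹' {0}ᶜ := by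
      ext x; simp [hS]
    rw [this]
    exact .iUnion fun n => (hkm.comp (measurable_sub_const _)) (measurableSet_singleton 0).compl
  have hinv : ((θ : AddCircle (1 : ℝ)) + ·) ⁻¹' S = S := by
    ext x
    simp only [hS, Set.mem_preimage, Set.mem_ofPred_eq]
    constructor
    · rintro ⟨n, hn⟩
      refine ⟨n - 1, ?_⟩
      convert hn using 2
      rw [sub_smul, one_smul]; abel
    · rintro ⟨n, hn⟩
      refine ⟨n + 1, ?_⟩
      convert hn using 2
      rw [add_smul, one_smul]; abel
  rcases herg.toPreErgodic.ae_empty_or_univ hSm hinv with h0 | h1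
  · refine absurd ?_ hk
    filter_upwards [ae_eq_empty.1 h0 |> measure_eq_zero_iff_ae_notMem.1] with x hx
    by_contra hne
    exact hx ⟨0, by simpa using hne⟩
  · exact Filter.eventuallyEq_univ.1 h1

/-- (Topological irreducibility of `E = L¹(𝕋)` in Example 4.1.)  For
irrational `θ` and nonzero `η ∈ L¹(𝕋)`, the closed linear span of the functions
`x ↦ f(x)·η(x − nθ)`, for `f ∈ C(𝕋, ℂ)` and `n ∈ ℤ`, is all of `L¹(𝕋)`. -/
theorem span_of_translates_dense_in_L1_circle (θ : ℝ) (hθ : Irrational θ)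
    (η : Lp ℂ 1 (volume : Measure (AddCircle (1 : ℝ)))) (hη : η ≠ 0) :
    (Submodule.span ℂ
      {ψ : Lp ℂ 1 (volume : Measure (AddCircle (1 : ℝ))) |
        ∃ (f : C(AddCircle (1 : ℝ), ℂ)) (n : ℤ),
          (ψ : AddCircle (1 : ℝ) → ℂ) =ᵐ[volume]
            fun x => f x * (η : AddCircle (1 : ℝ) → ℂ)
              (x - n • (θ : AddCircle (1 : ℝ)))}).topologicalClosure = ⊤ := by
  have hηm : Measurable (η : AddCircle (1 : ℝ) → ℂ) := (Lp.stronglyMeasurable η).measurable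
  have hηi : Integrable (η : AddCircle (1 : ℝ) → ℂ) volume := L1.integrable_coeFn η
  have hη0 : ¬ (η : AddCircle (1 : ℝ) → ℂ) =ᵐ[volume] 0 :=
    fun h => hη (Lp.eq_zero_iff_ae_eq_zero.2 h)
  have htm : ∀ n : ℤ, Measurable fun x => η (x - n • (θ : AddCircle (1 : ℝ))) :=
    fun n => hηm.comp (measurable_sub_const _)
  have hti : ∀ n : ℤ, Integrable (fun x => η (x - n • (θ : AddCircle (1 : ℝ)))) volume :=
    fun n => hηi.comp_sub_right _
  obtain ⟨e⟩ : Nonempty (ℕ ≃ ℤ) := ⟨(Denumerable.eqv ℤ).symm⟩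
  refine (Submodule.eq_top_iff').2 fun h => ?_
  refine mem_of_support_cover (Submodule.isClosed_topologicalClosure _)
    (A := fun i => {x | η (x - e i • (θ : AddCircle (1 : ℝ))) ≠ 0}) (fun i => ?_) ?_ ?_ h
  · exact (htm (e i)) (measurableSet_singleton 0).compl
  · filter_upwards [ae_exists_translate_ne_zero hθ hηm hη0] with x ⟨n, hn⟩
    exact ⟨e.symm n, by simpa using hn⟩
  · intro i g hg
    rw [← SetLike.mem_coe, Submodule.topologicalClosure_coe, Metric.mem_closure_iff]
    intro ε hε
    obtain ⟨f, hf⟩ := exists_continuous_mul_close (htm (e i)) (hti (e i))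
      (Lp.stronglyMeasurable g).measurable (L1.integrable_coeFn g)
      (by filter_upwards [hg] with x hx h0 using hx (fun hc => hc h0))
      (ε := ENNReal.ofReal (ε / 2)) (by simpa using hε)
    have hfi : Integrable
        (fun x => f x * η (x - e i • (θ : AddCircle (1 : ℝ)))) volume :=
      (hti (e i)).bdd_mul (c := ‖f‖) f.continuous.aestronglyMeasurable
        (.of_forall fun x => f.norm_coe_le_norm x)
    refine ⟨hfi.toL1 _, Submodule.subset_span ⟨f, e i, hfi.coeFn_toL1⟩, ?_⟩
    have hle : edist g (hfi.toL1 _) ≤ ENNReal.ofReal (ε / 2) := by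
      refine le_of_eq_of_le ?_ hf
      rw [Lp.edist_def, eLpNorm_one_eq_lintegral_enorm]
      refine lintegral_congr_ae ?_
      filter_upwards [hfi.coeFn_toL1] with x hx
      rw [Pi.sub_apply, hx]
    rw [edist_dist, ENNReal.ofReal_le_ofReal_iff (by positivity)] at hle
    linarith
end

section
/- Let θ be an irrational real number and let 𝕋 = ℝ/ℤ be the additive circle with Haar probability measure μ. Let x* : C(𝕋, ℂ) → ℂ be a continuous linear functional which is positive (x*(f) is a nonnegative real number whenever f takes values in the nonnegative reals) and satisfies x*(f(·−θ)) = x*(f) for every f ∈ C(𝕋, ℂ). Then there is a constant c ≥ 0 such that x*(f) = c·∫_𝕋 f dμ for every f ∈ C(𝕋, ℂ). -/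
/-!
The characters `fourier n` span a dense subspace of `C(𝕋, ℂ)`, and rotation by `θ` multiplies
`fourier n` by the scalar `fourier n (-θ)`, which differs from `1` when `θ` is irrational and
`n ≠ 0`. A rotation-invariant continuous functional therefore kills every nontrivial character,
so it is determined by its value at `1` (`eq_zero_of_rotation_invariant`). Integration against
Haar measure is one such functional, with value `1` at `1`; hence `x` equals `x 1` times it, and
`x 1 ≥ 0` by positivity.
-/

open MeasureTheory

lemma fourier_neg_irrational_ne_one {θ : ℝ} (hθ : Irrational θ) {n : ℤ} (hn : n ≠ 0) :
    fourier n (-(θ : AddCircle (1 : ℝ))) ≠ 1 := by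
  intro h
  rw [fourier_apply, Circle.coe_eq_one, ← AddCircle.toCircle_zero] at h
  have h0 : n • (-(θ : AddCircle (1 : ℝ))) = 0 := AddCircle.injective_toCircle one_ne_zero h
  rw [smul_neg, neg_eq_zero, ← AddCircle.coe_zsmul, AddCircle.coe_eq_zero_iff] at h0
  obtain ⟨m, hm⟩ := h0
  simp only [zsmul_eq_mul, mul_one] at hm
  exact (hθ.intCast_mul hn).ne_int m hm.symm

lemma eq_zero_of_rotation_invariant {θ : ℝ} (hθ : Irrational θ)
    (y : C(AddCircle (1 : ℝ), ℂ) →L[ℂ] ℂ)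
    (hinv : ∀ f g : C(AddCircle (1 : ℝ), ℂ),
      (∀ t, g t = f (t - (θ : AddCircle (1 : ℝ)))) → y g = y f)
    (h1 : y 1 = 0) : y = 0 := by
  have : Fact (0 < (1 : ℝ)) := ⟨one_pos⟩
  refine ContinuousLinearMap.ext_on
    (s := Set.range (fourier (T := (1 : ℝ)))) ?_ ?_
  · exact (Submodule.dense_iff_topologicalClosure_eq_top).2 span_fourier_closure_eq_top
  · rintro _ ⟨n, rfl⟩
    by_cases hn : n = 0
    · subst hn
      have : (fourier 0 : C(AddCircle (1 : ℝ), ℂ)) = 1 := by ext t; simp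
      rw [this, h1]; rfl
    · have h := hinv (fourier n)
        (fourier n (-(θ : AddCircle (1 : ℝ))) • fourier n) (fun t => by
          simp [fourier_apply, sub_eq_add_neg, smul_add, AddCircle.toCircle_add, mul_comm])
      rw [map_smul, smul_eq_mul] at h
      by_contra h0
      exact fourier_neg_irrational_ne_one hθ hn ((mul_eq_right₀ h0).1 h)

/-- (Example 4.1.)  A positive continuous linear functional on `C(𝕋, ℂ)`
invariant under a single irrational rotation `θ` is a nonnegative multiple of integration
against the Haar probability measure. -/
theorem invariant_positive_functional_is_haar (θ : ℝ) (hθ : Irrational θ)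
    (x : C(AddCircle (1 : ℝ), ℂ) →L[ℂ] ℂ)
    (hpos : ∀ f : C(AddCircle (1 : ℝ), ℂ),
      (∀ t, (f t).im = 0 ∧ 0 ≤ (f t).re) → ((x f).im = 0 ∧ 0 ≤ (x f).re))
    (hinv : ∀ f g : C(AddCircle (1 : ℝ), ℂ),
      (∀ t, g t = f (t - (θ : AddCircle (1 : ℝ)))) → x g = x f) :
    ∃ c : ℝ, 0 ≤ c ∧ ∀ f : C(AddCircle (1 : ℝ), ℂ),
      x f = (c : ℂ) * ∫ t, f t ∂(volume : Measure (AddCircle (1 : ℝ))) := by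
  have hint : ∀ f : C(AddCircle (1 : ℝ), ℂ), Integrable f volume := fun f =>
    f.continuous.integrable_of_hasCompactSupport (HasCompactSupport.of_compactSpace _)
  have hvol : (volume : Measure (AddCircle (1 : ℝ))).real Set.univ = 1 := by
    simp [Measure.real, AddCircle.measure_univ]
  let I : C(AddCircle (1 : ℝ), ℂ) →L[ℂ] ℂ := LinearMap.mkContinuous
    { toFun := fun f => ∫ t, f t
      map_add' := fun f g => integral_add (hint f) (hint g)
      map_smul' := fun a f => integral_const_mul a f } 1 (fun f => by
        have := norm_integral_le_of_norm_le_const (μ := (volume : Measure (AddCircle (1 : ℝ))))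
          (f := f) (C := ‖f‖) (.of_forall f.norm_coe_le_norm)
        rw [hvol] at this
        simpa using this)
  have hI : ∀ f, I f = ∫ t, f t := fun _ => rfl
  obtain ⟨him, hre⟩ := hpos 1 (fun t => by simp)
  have hc : (((x 1).re : ℝ) : ℂ) = x 1 := Complex.ext rfl him.symm
  refine ⟨(x 1).re, hre, fun f => ?_⟩
  have hy : x - x 1 • I = 0 := by
    refine eq_zero_of_rotation_invariant hθ _ (fun f g hfg => ?_) ?_
    · have : I g = I f := by
        simp only [hI, hfg]
        exact integral_sub_right_eq_self (fun t => f t) _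
      simp [hinv f g hfg, this]
    · have : I 1 = 1 := by simp [hI, hvol]
      simp [this]
  have := congrArg (fun y => y f) hy
  rw [hc, ← hI]
  simpa [sub_eq_zero] using this
end

section
/- Let γ be an irrational real number. For every nonzero η ∈ L¹(ℝ) (with respect to Lebesgue measure), the closed linear span in L¹(ℝ) of the set of functions { x ↦ f(x)·η(x − n − mγ) : f a compactly supported continuous function ℝ → ℂ, n, m ∈ ℤ } is all of L¹(ℝ). -/
open MeasureTheory

/-!
Write `M` for the closed span, `S = {η ≠ 0}`, and let `t` run over the countable dense subgroup
`ℤ + ℤγ`.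

An `h ∈ L¹` vanishing off the translate `S + t` lies in `M`: the quotient `h / η(· - t)` is
integrable for the finite measure `|η(x - t)| dx`, so it is a limit of compactly supported
continuous functions `f` in `L¹` of that measure, which says exactly that `f · η(· - t) → h` in
`L¹(ℝ)` (`mem_of_forall_mul_mem`).

The translates `S + t` cover almost all of `ℝ` (`ae_exists_sub_mem_of_denseRange`): if `N` is the
set they miss, then `vol ((S + t) ∩ N)` vanishes for `t` in a dense set, hence for all `t` by
continuity of translation in measure, and Fubini gives `vol S = 0` or `vol N = 0`.

Cutting an arbitrary `h ∈ L¹` along an increasing sequence of finite unions of these translates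
then exhibits it as a limit of elements of `M` (`eq_top_of_ae_mem_iUnion`).
-/

open Filter Topology Set
open scoped ENNReal symmDiff

/-- A closed set `M` of `L¹` that contains every `f · θ`, with `f` continuous of compact support,
contains every `h ∈ L¹` supported in `{θ ≠ 0}`, because `h / θ` can be approximated by such `f`
in `L¹(|θ| dx)`. -/
theorem mem_of_forall_mul_mem {θ : ℝ → ℂ} (hθ : Integrable θ)
    {M : Set (Lp ℂ 1 (volume : Measure ℝ))} (hM : IsClosed M)
    (hmem : ∀ f : C(ℝ, ℂ), HasCompactSupport f → ∀ ψ : Lp ℂ 1 (volume : Measure ℝ),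
      (ψ : ℝ → ℂ) =ᵐ[volume] (fun x => f x * θ x) → ψ ∈ M)
    (h : Lp ℂ 1 (volume : Measure ℝ)) (hh : ∀ᵐ x, θ x = 0 → (h : ℝ → ℂ) x = 0) : h ∈ M := by
  have hθm : AEMeasurable (fun x => ‖θ x‖ₑ) := hθ.1.enorm
  have hlt : ∀ᵐ x : ℝ, ‖θ x‖ₑ < ∞ := by simp
  have hhi : Integrable (h : ℝ → ℂ) := L1.integrable_coeFn h
  have : IsFiniteMeasure (volume.withDensity fun x => ‖θ x‖ₑ) :=
    isFiniteMeasure_withDensity hθ.2.ne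
  have hq : Integrable (fun x => (h : ℝ → ℂ) x / θ x) (volume.withDensity fun x => ‖θ x‖ₑ) := by
    rw [integrable_withDensity_iff_integrable_smul₀' hθm hlt]
    refine hhi.mono ?_ ?_
    · exact hθm.ennreal_toReal.aestronglyMeasurable.smul
        (hhi.1.aemeasurable.div hθ.1.aemeasurable).aestronglyMeasurable
    · refine ae_of_all _ fun x => ?_
      rcases eq_or_ne (θ x) 0 with h0 | h0
      · simp [h0]
      · simp [mul_div_cancel₀ _ (norm_ne_zero_iff.2 h0)]
  rw [← hM.closure_eq, EMetric.mem_closure_iff]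
  intro ε hε
  obtain ⟨δ, hδ, hδε⟩ := exists_between hε
  obtain ⟨g, hgs, hgd, hgc, hgi⟩ := hq.exists_hasCompactSupport_lintegral_sub_le hδ.ne'
  have hgb : Integrable (fun x => g x * θ x) := by
    obtain ⟨C, hC⟩ := hgs.exists_bound_of_continuous hgc
    exact hθ.bdd_mul hgc.aestronglyMeasurable (ae_of_all _ hC)
  refine ⟨hgb.toL1 _, hmem ⟨g, hgc⟩ hgs _ hgb.coeFn_toL1, lt_of_le_of_lt ?_ hδε⟩
  rw [L1.edist_def]
  refine le_of_eq_of_le ?_ hgd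
  rw [lintegral_withDensity_eq_lintegral_mul_non_measurable₀ _ hθm hlt]
  refine lintegral_congr_ae ?_
  filter_upwards [hh, hgb.coeFn_toL1] with x hx hgx
  rw [hgx, edist_eq_enorm_sub, Pi.mul_apply, ← enorm_mul]
  rcases eq_or_ne (θ x) 0 with h0 | h0
  · simp [h0, hx h0]
  · congr 1
    field_simp

/-- Countably many translates, by a dense set of real numbers, of a set of positive measure cover
almost all of `ℝ`. -/
theorem ae_exists_sub_mem_of_denseRange {ι : Type*} [Countable ι] {d : ι → ℝ} (hd : DenseRange d)
    {S : Set ℝ} (hS : MeasurableSet S) (hS0 : volume S ≠ 0) :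
    ∀ᵐ x : ℝ, ∃ i, x - d i ∈ S := by
  -- Continuity of translation in measure is only available for sets of finite measure.
  obtain ⟨T, hT, hTS, hT0, hTtop⟩ :=
    Measure.exists_subset_measure_lt_top hS (pos_iff_ne_zero.2 hS0)
  let N : Set ℝ := {x | ∀ i, x - d i ∉ T}
  have hN : MeasurableSet N := by
    have : N = ⋂ i, (fun x => x - d i) ⁻¹' Tᶜ := by ext; simp [N]
    rw [this]
    exact MeasurableSet.iInter fun i => hT.compl.preimage (measurable_sub_const _)
  let F : C(ℝ × ℝ, ℝ) := ⟨fun p => p.2 - p.1, by fun_prop⟩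
  have hF : Continuous (F.curry : ℝ → C(ℝ, ℝ)) := F.curry.continuous
  have hFm (t : ℝ) : MeasurePreserving (F.curry t) volume volume :=
    measurePreserving_sub_right volume t
  have key (t : ℝ) : volume ((F.curry t ⁻¹' T) ∩ N) = 0 := by
    by_contra hne
    have hlim := tendsto_measure_symmDiff_preimage_nhds_zero (hF.tendsto t)
      (.of_forall hFm) (hFm t) hT.nullMeasurableSet hTtop.ne
    obtain ⟨_, hi, i, rfl⟩ := mem_closure_iff_nhds.1 (hd t) _
      (hlim.eventually (gt_mem_nhds (pos_iff_ne_zero.2 hne)))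
    refine absurd hi (not_lt.2 (measure_mono ?_))
    rintro x ⟨hxT, hxN⟩
    exact Or.inr ⟨hxT, hxN i⟩
  have hswap : ∀ᵐ x : ℝ, ∀ᵐ t : ℝ, x - t ∈ T → x ∉ N := by
    rw [Measure.ae_ae_comm]
    · refine ae_of_all _ fun t => ?_
      rw [ae_iff]
      convert key t using 2
      ext x
      simp [F]
    · have : MeasurableSet ({p : ℝ × ℝ | p.1 - p.2 ∈ T} ∩ {p | p.1 ∈ N})ᶜ :=
        ((hT.preimage (measurable_fst.sub measurable_snd)).inter
          (hN.preimage measurable_fst)).compl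
      convert this using 1
      ext p
      simp
  filter_upwards [hswap] with x hx
  by_contra! hxS
  have hxN : x ∈ N := fun i hi => hxS i (hTS hi)
  have h1 : ∀ᵐ t : ℝ, x - t ∉ T := hx.mono fun t ht htT => ht htT hxN
  have h2 : ∀ᵐ t : ℝ, t ∉ T := by
    simpa using (Measure.measurePreserving_sub_left volume x).quasiMeasurePreserving.ae h1
  exact hT0.ne' (by simpa [ae_iff] using h2)

/-- A closed subspace of `L¹` that contains all functions supported in `A i`, for each `i`, is the
whole space when the `A i` cover almost everything. -/
theorem eq_top_of_ae_mem_iUnion {A : ℕ → Set ℝ} (hA : ∀ i, MeasurableSet (A i))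
    (hcov : ∀ᵐ x : ℝ, ∃ i, x ∈ A i) {M : Submodule ℂ (Lp ℂ 1 (volume : Measure ℝ))}
    (hM : IsClosed (M : Set (Lp ℂ 1 (volume : Measure ℝ))))
    (hmem : ∀ i, ∀ h : Lp ℂ 1 (volume : Measure ℝ),
      (∀ᵐ x, x ∉ A i → (h : ℝ → ℂ) x = 0) → h ∈ M) : M = ⊤ := by
  rw [eq_top_iff]
  intro h _
  have hhi : Integrable (h : ℝ → ℂ) := L1.integrable_coeFn h
  let B : ℕ → Set ℝ := fun n => ⋃ i < n, A i
  have hB (n : ℕ) : MeasurableSet (B n) := .biUnion (to_countable _) fun i _ => hA i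
  have hBM (n : ℕ) : (hhi.indicator (hB n)).toL1 _ ∈ M := by
    induction n with
    | zero =>
      refine hmem 0 _ ?_
      filter_upwards [(hhi.indicator (hB 0)).coeFn_toL1] with x hx _
      rw [hx, indicator_of_notMem (by simp [B])]
    | succ n ih =>
      have hd : MeasurableSet (A n \ B n) := (hA n).diff (hB n)
      have hnew : (hhi.indicator hd).toL1 _ ∈ M := by
        refine hmem n _ ?_
        filter_upwards [(hhi.indicator hd).coeFn_toL1] with x hx hxA
        rw [hx, indicator_of_notMem fun hxd => hxA hxd.1]
      convert M.add_mem ih hnew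
      rw [← Integrable.toL1_add, Integrable.toL1_eq_toL1_iff]
      have : B (n + 1) = B n ∪ A n \ B n := by
        simp only [B, biUnion_lt_succ, union_sdiff_self]
      rw [this, indicator_union_of_disjoint disjoint_sdiff_right]
      rfl
  refine hM.mem_of_tendsto (b := atTop) (f := fun n => (hhi.indicator (hB n)).toL1 _) ?_
    (.of_forall hBM)
  rw [tendsto_iff_edist_tendsto_0]
  have hdist (n : ℕ) : edist ((hhi.indicator (hB n)).toL1 _) h
      = ∫⁻ x, (B n)ᶜ.indicator (fun x => ‖(h : ℝ → ℂ) x‖ₑ) x := by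
    rw [L1.edist_def]
    refine lintegral_congr_ae ?_
    filter_upwards [(hhi.indicator (hB n)).coeFn_toL1] with x hx
    rw [hx]
    by_cases hxB : x ∈ B n <;> simp [hxB, edist_eq_enorm_sub]
  simp_rw [hdist]
  rw [← lintegral_zero (μ := (volume : Measure ℝ))]
  refine tendsto_lintegral_of_dominated_convergence' (fun x => ‖(h : ℝ → ℂ) x‖ₑ)
    (fun n => hhi.1.enorm.indicator (hB n).compl)
    (fun n => ae_of_all _ fun x => indicator_le_self _ _ x) hhi.2.ne ?_
  filter_upwards [hcov] with x ⟨i, hi⟩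
  refine tendsto_const_nhds.congr' ?_
  filter_upwards [eventually_gt_atTop i] with n hn
  have hxB : x ∈ B n := mem_biUnion (show i ∈ {j | j < n} from hn) hi
  simp [hxB]

theorem denseRange_int_add_int_mul {γ : ℝ} (hγ : Irrational γ) :
    DenseRange fun p : ℤ × ℤ => (p.1 : ℝ) + p.2 * γ := by
  have h : Dense (AddSubgroup.closure {γ, 1} : Set ℝ) :=
    dense_addSubgroupClosure_pair_iff.2 (by simpa using hγ)
  refine h.mono fun x hx => ?_
  obtain ⟨m, n, rfl⟩ := AddSubgroup.mem_closure_pair.1 hx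
  exact ⟨(n, m), by simp [add_comm]⟩

/-- (Topological irreducibility of `E = L¹(ℝ)` in the proof of
(ii) ⇒ (iii) of Theorem 5.3.)  For irrational `γ` and nonzero `η ∈ L¹(ℝ)`, the closed
linear span of the functions `x ↦ f(x)·η(x − n − mγ)`, for `f` compactly supported
continuous and `n, m ∈ ℤ`, is all of `L¹(ℝ)`. -/
theorem span_of_translates_dense_in_L1_real (γ : ℝ) (hγ : Irrational γ)
    (η : Lp ℂ 1 (volume : Measure ℝ)) (hη : η ≠ 0) :
    (Submodule.span ℂ
      {ψ : Lp ℂ 1 (volume : Measure ℝ) |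
        ∃ (f : C(ℝ, ℂ)) (_ : HasCompactSupport f) (n m : ℤ),
          (ψ : ℝ → ℂ) =ᵐ[volume]
            fun x : ℝ => f x * (η : ℝ → ℂ)
              (x - (n : ℝ) - (m : ℝ) * γ)}).topologicalClosure = ⊤ := by
  set M := (Submodule.span ℂ
      {ψ : Lp ℂ 1 (volume : Measure ℝ) |
        ∃ (f : C(ℝ, ℂ)) (_ : HasCompactSupport f) (n m : ℤ),
          (ψ : ℝ → ℂ) =ᵐ[volume]
            fun x : ℝ => f x * (η : ℝ → ℂ)
              (x - (n : ℝ) - (m : ℝ) * γ)}).topologicalClosure with hMdef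
  have hM : IsClosed (M : Set (Lp ℂ 1 (volume : Measure ℝ))) :=
    Submodule.isClosed_topologicalClosure _
  let S : Set ℝ := {x | (η : ℝ → ℂ) x ≠ 0}
  have hS : MeasurableSet S :=
    (measurableSet_singleton (0 : ℂ)).compl.preimage (Lp.stronglyMeasurable η).measurable
  have hS0 : volume S ≠ 0 := fun h0 => hη ((Lp.eq_zero_iff_ae_eq_zero).2 (ae_iff.2 h0))
  obtain ⟨e, he⟩ := exists_surjective_nat (ℤ × ℤ)
  let d : ℕ → ℝ := fun k => ((e k).1 : ℝ) + (e k).2 * γ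
  have hd : DenseRange d :=
    (denseRange_int_add_int_mul hγ).comp he.denseRange continuous_of_discreteTopology
  refine eq_top_of_ae_mem_iUnion (A := fun k => {x | x - d k ∈ S})
    (fun k => hS.preimage (measurable_sub_const _))
    (ae_exists_sub_mem_of_denseRange hd hS hS0) hM fun k h hh => ?_
  refine mem_of_forall_mul_mem (θ := fun x => (η : ℝ → ℂ) (x - d k))
    ((L1.integrable_coeFn η).comp_sub_right (d k)) hM (fun f hf ψ hψ => ?_) h ?_
  · refine Submodule.le_topologicalClosure _ (Submodule.subset_span ?_)
    refine ⟨f, hf, (e k).1, (e k).2, ?_⟩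
    simpa only [d, sub_sub] using hψ
  · filter_upwards [hh] with x hx h0
    exact hx (by simpa [S] using h0)
end

section
/- Let θ be an irrational real number and let 𝕋 = ℝ/ℤ be the additive circle. Let g : 𝕋 → ℝ be continuous, with g(x) ≥ 0 for all x and g not identically zero. Then there is a finite set S ⊆ ℤ such that Σ_{n∈S} g(x − nθ) > 0 for every x ∈ 𝕋. -/
/-!
The multiples of an irrational `θ` are dense in the circle, so for each `x` some `nθ` lies in the
nonempty open set `{y | 0 < g (x - y)}`. Hence the open sets `{x | 0 < g (x - nθ)}`, `n ∈ ℤ`, cover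
the circle, and by compactness finitely many of them suffice. Over those indices the sum has
nonnegative terms, at least one of them positive at every point.
-/

/-- Let `θ` be an irrational real number and `𝕋 = ℝ/ℤ` the additive
circle.  If `g : 𝕋 → ℝ` is continuous, nonnegative and not identically zero, then
finitely many translates of `g` by multiples of `θ` have everywhere strictly positive sum. -/
theorem finite_sum_of_translates_pos (θ : ℝ) (hθ : Irrational θ)
    (g : C(AddCircle (1 : ℝ), ℝ)) (hg0 : ∀ x, 0 ≤ g x) (hgne : g ≠ 0) :
    ∃ S : Finset ℤ, ∀ x : AddCircle (1 : ℝ),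
      0 < ∑ n ∈ S, g (x - n • (θ : AddCircle (1 : ℝ))) := by
  have hdense : DenseRange (fun n : ℤ => n • (θ : AddCircle (1 : ℝ))) :=
    AddCircle.denseRange_zsmul_coe_iff.2 (by simpa using hθ)
  obtain ⟨x₀, hx₀⟩ : ∃ x₀, g x₀ ≠ 0 := by
    by_contra! h
    exact hgne (ContinuousMap.ext h)
  obtain ⟨S, hS⟩ := isCompact_univ.elim_finite_subcover
    (fun n : ℤ => {x : AddCircle (1 : ℝ) | 0 < g (x - n • (θ : AddCircle (1 : ℝ)))})
    (fun n => isOpen_lt continuous_const (by fun_prop)) (by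
      intro x _
      obtain ⟨n, hn⟩ := hdense.exists_mem_open
        (s := {y : AddCircle (1 : ℝ) | 0 < g (x - y)})
        (isOpen_lt continuous_const (by fun_prop))
        ⟨x - x₀, by simpa using (hg0 x₀).lt_of_ne' hx₀⟩
      exact Set.mem_iUnion.2 ⟨n, hn⟩)
  refine ⟨S, fun x => Finset.sum_pos' (fun n _ => hg0 _) ?_⟩
  simpa using hS (Set.mem_univ x)
end
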